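/- arXiv:1712.01542 — 2 statements merged into one kernel-verified Lean document; each statement's English description precedes it below -/
import Mathlib

section
/- Let T be a finite-dimensional nilpotent Lie algebra over a field F of nilpotency class 3 with dim [T,T] = 2 such that T is stem (i.e. Z(T) ⊆ [T,T]). Then T is capable if and only if 3 ≤ dim (T/Z(T)) ≤ 4. -/
open Module

universe u

/-- A witness to the capability of a Lie algebra `L` over `F`: a Lie algebra `E`
together with an isomorphism `L ≃ E ⧸ Z(E)`. -/
structure CapableWitness (F : Type u) (L : Type u) [Field F] [LieRing L] [LieAlgebra F L] where
  carrier : Type u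
  [lieRing : LieRing carrier]
  [lieAlgebra : LieAlgebra F carrier]
  equiv : L ≃ₗ⁅F⁆ (carrier ⧸ LieAlgebra.center F carrier)

/-- A Lie algebra `L` over a field `F` is capable if there exists a Lie algebra `E` over `F`
with `L ≅ E ⧸ Z(E)`. -/
def IsCapable (F : Type u) (L : Type u) [Field F] [LieRing L] [LieAlgebra F L] : Prop :=
  Nonempty (CapableWitness F L)

/-! Write `z = ⁅x, y⁆` and `w = ⁅x, z⁆` with `y` centralizing `z`, so that `T² = ⟨z, w⟩` and
`Z(T) = ⟨w⟩`; then `T = ⟨x, y, z⟩ ⊕ D`, where `D` centralizes `x` and `z` and contains `w`.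

If `D` is not abelian, then `w` is a multiple of a bracket `⁅d, e⁆` in `D`. In any `E` with
`E ⧸ Z(E) ≅ T`, the Jacobi identity makes lifts of `x` and of `⁅d, e⁆` commute, and from there
every lift of `w` turns out to be central, which is absurd. If `D` is abelian, an explicit
`2`-cocycle that does not kill `w` defines a central extension of `T` whose centre is exactly the
kernel.

Finally `dim T/Z(T) = 3 + dim D/Z(T)`. If `D` is abelian, `⁅y, ·⁆ : D → ⟨w⟩` has kernel `Z(T)`, so
that `dim D/Z(T) ≤ 1`; conversely, `dim D/Z(T) ≤ 1` forces `D` to be abelian. -/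

section LinearAlgebra

variable {F V : Type*} [Field F] [AddCommGroup V] [Module F V]

theorem span_pair_eq_of_linearIndependent_of_finrank_eq_two {N : Submodule F V}
    (hN : finrank F N = 2) {a b : V} (ha : a ∈ N) (hb : b ∈ N) (hab : LinearIndependent F ![a, b]) :
    Submodule.span F {a, b} = N := by
  have : Module.Finite F N := Module.finite_of_finrank_pos (by omega)
  refine Submodule.eq_of_le_of_finrank_eq ?_ ?_
  · rw [Submodule.span_le, Set.pair_subset_iff]
    exact ⟨ha, hb⟩
  · rw [hN, ← Matrix.range_cons_cons_empty a b ![], finrank_span_eq_card hab, Fintype.card_fin]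

theorem exists_dual_apply_eq {ι : Type*} {v : ι → V} (hv : LinearIndependent F v)
    (c : ι → F) : ∃ f : Dual F V, ∀ i, f (v i) = c i := by
  obtain ⟨f, hf⟩ := ((Basis.span hv).constr F c).exists_extend
  refine ⟨f, fun i => ?_⟩
  calc f (v i) = (f ∘ₗ (Submodule.span F (Set.range v)).subtype) (Basis.span hv i) := by
        rw [LinearMap.comp_apply, Submodule.subtype_apply, Basis.span_apply]
    _ = c i := by rw [hf, Basis.constr_basis]

end LinearAlgebra

section LieAlgebra

variable {R L : Type*} [CommRing R] [LieRing L] [LieAlgebra R L]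

theorem lowerCentralSeries_succ_eq_bot_iff_le_center (k : ℕ) :
    LieModule.lowerCentralSeries R L L (k + 1) = ⊥ ↔
      LieModule.lowerCentralSeries R L L k ≤ LieAlgebra.center R L := by
  have h := LieSubmodule.lcs_add_le_iff (R := R) (N₁ := (⊤ : LieSubmodule R L L)) (N₂ := ⊥) k 1
  rwa [LieSubmodule.ucs_bot_one, le_bot_iff] at h

theorem lie_mem_lowerCentralSeries_succ {k : ℕ} {b : L}
    (hb : b ∈ LieModule.lowerCentralSeries R L L k) (a : L) :
    ⁅a, b⁆ ∈ LieModule.lowerCentralSeries R L L (k + 1) := by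
  rw [LieModule.lowerCentralSeries_succ]
  exact LieSubmodule.lie_mem_lie (LieSubmodule.mem_top a) hb

theorem lie_mem_lowerCentralSeries_one (a b : L) :
    ⁅a, b⁆ ∈ LieModule.lowerCentralSeries R L L 1 :=
  lie_mem_lowerCentralSeries_succ (k := 0) (LieSubmodule.mem_top b) a

theorem lie_mem_center_of_lowerCentralSeries_eq_bot {k : ℕ}
    (h : LieModule.lowerCentralSeries R L L (k + 2) = ⊥) {b : L}
    (hb : b ∈ LieModule.lowerCentralSeries R L L k) (a : L) : ⁅a, b⁆ ∈ LieAlgebra.center R L :=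
  (lowerCentralSeries_succ_eq_bot_iff_le_center (k + 1)).1 h (lie_mem_lowerCentralSeries_succ hb a)

theorem lie_eq_zero_of_mem_center {c : L} (hc : c ∈ LieAlgebra.center R L) (a : L) : ⁅a, c⁆ = 0 :=
  (LieModule.mem_maxTrivSubmodule R L L c).1 hc a

theorem lie_eq_zero_of_mem_center_left {c : L} (hc : c ∈ LieAlgebra.center R L) (a : L) :
    ⁅c, a⁆ = 0 := by
  rw [← lie_skew, lie_eq_zero_of_mem_center hc, neg_zero]

theorem exists_lie_lie_ne_zero_of_lowerCentralSeries_two_ne_bot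
    (h : LieModule.lowerCentralSeries R L L 2 ≠ ⊥) : ∃ r s t : L, ⁅r, ⁅s, t⁆⁆ ≠ 0 := by
  contrapose! h
  rw [lowerCentralSeries_succ_eq_bot_iff_le_center, LieModule.lowerCentralSeries_succ,
    LieSubmodule.lie_le_iff]
  exact fun s _ t _ => (LieModule.mem_maxTrivSubmodule R L L _).2 fun r => h r s t

end LieAlgebra

section ClassThree

variable {F L : Type*} [Field F] [LieRing L] [LieAlgebra F L]

theorem linearIndependent_pair_lie {u z : L} (h : ⁅u, z⁆ ≠ 0) (h' : ⁅u, ⁅u, z⁆⁆ = 0) :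
    LinearIndependent F ![z, ⁅u, z⁆] := by
  refine LinearIndependent.pair_iff.2 fun p q hpq => ?_
  have hp : p = 0 := by simpa [h, h'] using congrArg (⁅u, ·⁆) hpq
  exact ⟨hp, by simpa [hp, h] using hpq⟩

theorem span_pair_lie_eq_lowerCentralSeries_one (h3 : LieModule.lowerCentralSeries F L L 3 = ⊥)
    (hder : finrank F ↥(LieModule.lowerCentralSeries F L L 1) = 2) {u z : L}
    (hz : z ∈ LieModule.lowerCentralSeries F L L 1) (huz : ⁅u, z⁆ ≠ 0) :
    Submodule.span F {z, ⁅u, z⁆} = (LieModule.lowerCentralSeries F L L 1).toSubmodule := by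
  have hcenter : ⁅u, z⁆ ∈ LieAlgebra.center F L :=
    lie_mem_center_of_lowerCentralSeries_eq_bot h3 hz u
  exact span_pair_eq_of_linearIndependent_of_finrank_eq_two hder hz
    (lie_mem_lowerCentralSeries_one u z)
    (linearIndependent_pair_lie huz (lie_eq_zero_of_mem_center hcenter u))

theorem exists_lie_lie_self_ne_zero (h2 : LieModule.lowerCentralSeries F L L 2 ≠ ⊥)
    (h3 : LieModule.lowerCentralSeries F L L 3 = ⊥)
    (hder : finrank F ↥(LieModule.lowerCentralSeries F L L 1) = 2) :
    ∃ x y : L, ⁅x, ⁅x, y⁆⁆ ≠ 0 := by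
  obtain ⟨r, s, t, hrst⟩ := exists_lie_lie_ne_zero_of_lowerCentralSeries_two_ne_bot h2
  by_contra! h
  have hcenter : ⁅r, ⁅s, t⁆⁆ ∈ LieAlgebra.center F L :=
    lie_mem_center_of_lowerCentralSeries_eq_bot h3 (lie_mem_lowerCentralSeries_one s t) r
  have lie_lie_eq_zero (v a b : L) (hv : ⁅v, ⁅s, t⁆⁆ = 0) : ⁅v, ⁅a, b⁆⁆ = 0 := by
    have hab : ⁅a, b⁆ ∈ Submodule.span F {⁅s, t⁆, ⁅r, ⁅s, t⁆⁆} := by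
      rw [span_pair_lie_eq_lowerCentralSeries_one h3 hder (lie_mem_lowerCentralSeries_one s t) hrst]
      exact lie_mem_lowerCentralSeries_one a b
    obtain ⟨p, q, hpq⟩ := Submodule.mem_span_pair.1 hab
    rw [← hpq, lie_add, lie_smul, lie_smul, hv, lie_eq_zero_of_mem_center hcenter, smul_zero,
      smul_zero, add_zero]
  have hs : ⁅s, ⁅r, t⁆⁆ = 0 := lie_lie_eq_zero s r t (h s t)
  have ht : ⁅t, ⁅r, s⁆⁆ = 0 :=
    lie_lie_eq_zero t r s (by rw [← lie_skew s t, lie_neg, h t s, neg_zero])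
  rw [leibniz_lie, hs, ← lie_skew, ht, neg_zero, add_zero] at hrst
  exact hrst rfl

theorem center_eq_span_lie (h3 : LieModule.lowerCentralSeries F L L 3 = ⊥)
    (hder : finrank F ↥(LieModule.lowerCentralSeries F L L 1) = 2)
    (hstem : LieAlgebra.center F L ≤ LieModule.lowerCentralSeries F L L 1) {x z : L}
    (hz : z ∈ LieModule.lowerCentralSeries F L L 1) (hxz : ⁅x, z⁆ ≠ 0) :
    (LieAlgebra.center F L).toSubmodule = F ∙ ⁅x, z⁆ := by
  have hcenter : ⁅x, z⁆ ∈ LieAlgebra.center F L :=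
    lie_mem_center_of_lowerCentralSeries_eq_bot h3 hz x
  refine le_antisymm (fun c hc => ?_) ((Submodule.span_singleton_le_iff_mem _ _).2 hcenter)
  have hspan : c ∈ Submodule.span F {z, ⁅x, z⁆} :=
    (span_pair_lie_eq_lowerCentralSeries_one h3 hder hz hxz).ge (hstem hc)
  obtain ⟨p, q, rfl⟩ := Submodule.mem_span_pair.1 hspan
  have hp : p • ⁅x, z⁆ = 0 := by
    simpa [lie_eq_zero_of_mem_center hcenter] using lie_eq_zero_of_mem_center hc x
  rw [(smul_eq_zero_iff_left hxz).1 hp, zero_smul, zero_add]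
  exact Submodule.smul_mem _ q (Submodule.mem_span_singleton_self _)

end ClassThree

section CentralExtension

variable {R L E : Type*} [CommRing R] [LieRing L] [LieAlgebra R L] [LieRing E] [LieAlgebra R E]
  {π : E →ₗ⁅R⁆ L}

theorem lie_eq_lie_of_map_eq (hπ : π.ker ≤ LieAlgebra.center R E) {a b : E} (h : π a = π b)
    (e : E) : ⁅e, a⁆ = ⁅e, b⁆ := by
  have hab : a - b ∈ π.ker := by rw [LieHom.mem_ker, map_sub, h, sub_self]
  rw [← sub_eq_zero, ← lie_sub, lie_eq_zero_of_mem_center (hπ hab)]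

theorem lie_lie_eq_zero_of_map_lie_eq_zero (hπ : π.ker ≤ LieAlgebra.center R E) {a b c : E}
    (hb : ⁅π a, π b⁆ = 0) (hc : ⁅π a, π c⁆ = 0) : ⁅a, ⁅b, c⁆⁆ = 0 := by
  rw [← LieHom.map_lie, ← LieHom.mem_ker] at hb hc
  rw [leibniz_lie, lie_eq_zero_of_mem_center_left (hπ hb), lie_eq_zero_of_mem_center (hπ hc),
    add_zero]

end CentralExtension

section Capable

variable {F L : Type u} [Field F] [LieRing L] [LieAlgebra F L]

theorem isCapable_iff_exists_surjective_ker_eq_center :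
    IsCapable F L ↔ ∃ (E : Type u) (_ : LieRing E) (_ : LieAlgebra F E) (π : E →ₗ⁅F⁆ L),
      Function.Surjective π ∧ π.ker = LieAlgebra.center F E := by
  constructor
  · rintro ⟨⟨E, e⟩⟩
    let π : E →ₗ⁅F⁆ L :=
      { e.symm.toLinearEquiv.toLinearMap ∘ₗ (LieAlgebra.center F E).toSubmodule.mkQ with
        map_lie' := fun {a b} =>
          e.symm.map_lie (LieSubmodule.Quotient.mk a) (LieSubmodule.Quotient.mk b) }
    refine ⟨E, _, _, π, e.symm.surjective.comp (LieSubmodule.Quotient.surjective_mk' _), ?_⟩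
    ext a
    calc a ∈ π.ker ↔ e.symm (LieSubmodule.Quotient.mk a) = 0 := LieHom.mem_ker
      _ ↔ (LieSubmodule.Quotient.mk a : E ⧸ LieAlgebra.center F E) = 0 :=
        map_eq_zero_iff e.symm e.symm.injective
      _ ↔ a ∈ LieAlgebra.center F E := LieSubmodule.Quotient.mk_eq_zero'
  · rintro ⟨E, _, _, π, hsurj, hker⟩
    have e := π.quotKerEquivRange
    rw [hker, (LieHom.range_eq_top π).2 hsurj] at e
    exact ⟨⟨E, (e.trans LieSubalgebra.topEquiv).symm⟩⟩

open LieModule.Cohomology in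
theorem isCapable_of_twoCocycle {M : Type u} [AddCommGroup M] [Module F M] [LieRingModule L M]
    [LieModule F L M] [LieModule.IsTrivial L M] (c : twoCocycle F L M)
    (hc : ∀ t ∈ LieAlgebra.center F L, (∀ s, (c : twoCochain F L M) s t = 0) → t = 0) :
    IsCapable F L := by
  let π : LieAlgebra.ofTwoCocycle c →ₗ⁅F⁆ L :=
    { toFun p := p.carrier.1
      map_add' _ _ := rfl
      map_smul' _ _ := rfl
      map_lie' := rfl }
  have bracket (p q : LieAlgebra.ofTwoCocycle c) :
      ⁅p, q⁆ = ⟨⁅π p, π q⁆, (c : twoCochain F L M) (π p) (π q)⟩ := by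
    rw [LieAlgebra.bracket_ofTwoCocycle, trivial_lie_zero L M, trivial_lie_zero L M, add_zero,
      sub_zero]
    rfl
  refine isCapable_iff_exists_surjective_ker_eq_center.2
    ⟨_, _, _, π, fun t => ⟨⟨t, 0⟩, rfl⟩, ?_⟩
  ext p
  rw [LieHom.mem_ker, LieModule.mem_maxTrivSubmodule]
  constructor
  · intro hp q
    rw [bracket, hp, lie_zero, map_zero]
    rfl
  · intro hp
    have hp' (s : L) : (⁅s, π p⁆, (c : twoCochain F L M) s (π p)) = 0 :=
      congrArg LieAlgebra.ofTwoCocycle.carrier ((bracket ⟨s, 0⟩ p).symm.trans (hp _))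
    exact hc _ ((LieModule.mem_maxTrivSubmodule F L L _).2 fun s => congrArg Prod.fst (hp' s))
      fun s => congrArg Prod.snd (hp' s)

end Capable

/-- Adapted elements `x`, `y`, `z`, `w` of a stem Lie algebra of class 3 with two-dimensional
derived subalgebra: the brackets lie in `⟨z, w⟩` and the centre is `⟨w⟩`. The functional `ω` serves
to read off the `w`-coordinate of a bracket, and is arbitrary outside `⟨z, w⟩`. -/
structure StemFrame (F T : Type*) [Field F] [LieRing T] [LieAlgebra F T] where
  x : T
  y : T
  z : T
  w : T
  ω : Dual F T
  lie_x_y : ⁅x, y⁆ = z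
  lie_x_z : ⁅x, z⁆ = w
  lie_y_z : ⁅y, z⁆ = 0
  ω_z : ω z = 0
  ω_w : ω w = 1
  center_eq : (LieAlgebra.center F T).toSubmodule = F ∙ w
  lie_mem_span : ∀ s t : T, ⁅s, t⁆ ∈ Submodule.span F {z, w}

namespace StemFrame

section Coordinates

variable {F T : Type*} [Field F] [LieRing T] [LieAlgebra F T] (S : StemFrame F T)

theorem mem_center_iff {t : T} : t ∈ LieAlgebra.center F T ↔ ∃ c : F, c • S.w = t := by
  rw [← LieSubmodule.mem_toSubmodule, S.center_eq, Submodule.mem_span_singleton]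

theorem w_mem_center : S.w ∈ LieAlgebra.center F T :=
  S.mem_center_iff.2 ⟨1, one_smul F _⟩

theorem lie_w (t : T) : ⁅t, S.w⁆ = 0 :=
  lie_eq_zero_of_mem_center S.w_mem_center t

theorem w_ne_zero : S.w ≠ 0 := fun h => by simpa [h] using S.ω_w

/-- The functional `α` with `⁅t, z⁆ = α t • w`: the `x`-coordinate of `t`. -/
def α : Dual F T := -(S.ω ∘ₗ LieModule.toEnd F T T S.z)

/-- The functional `β` with `⁅x, t⁆ = β t • z + γ t • w`: the `y`-coordinate of `t`. -/
def β : Dual F T := S.ω ∘ₗ LieModule.toEnd F T T S.x ∘ₗ LieModule.toEnd F T T S.x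

/-- The functional `γ` with `⁅x, t⁆ = β t • z + γ t • w`: the `z`-coordinate of `t`. -/
def γ : Dual F T := S.ω ∘ₗ LieModule.toEnd F T T S.x

/-- The functional `κ` with `⁅y, t⁆ = -α t • z + κ t • w`. -/
def κ : Dual F T := S.ω ∘ₗ LieModule.toEnd F T T S.y

theorem α_apply (t : T) : S.α t = S.ω ⁅t, S.z⁆ := by
  rw [← lie_skew, map_neg]; rfl

theorem β_apply (t : T) : S.β t = S.ω ⁅S.x, ⁅S.x, t⁆⁆ := rfl

theorem γ_apply (t : T) : S.γ t = S.ω ⁅S.x, t⁆ := rfl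

theorem κ_apply (t : T) : S.κ t = S.ω ⁅S.y, t⁆ := rfl

theorem exists_lie_eq (s t : T) : ∃ p : F, ⁅s, t⁆ = p • S.z + S.ω ⁅s, t⁆ • S.w := by
  obtain ⟨p, q, h⟩ := Submodule.mem_span_pair.1 (S.lie_mem_span s t)
  refine ⟨p, ?_⟩
  rw [← h]
  simp [S.ω_z, S.ω_w]

theorem lie_z (t : T) : ⁅t, S.z⁆ = S.α t • S.w := by
  obtain ⟨p, hp⟩ := S.exists_lie_eq t S.x
  obtain ⟨q, hq⟩ := S.exists_lie_eq t S.y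
  have hzy : ⁅S.z, S.y⁆ = 0 := by rw [← lie_skew, S.lie_y_z, neg_zero]
  have hwy : ⁅S.w, S.y⁆ = 0 := lie_eq_zero_of_mem_center_left S.w_mem_center _
  have h : ⁅t, S.z⁆ = q • S.w :=
    calc ⁅t, S.z⁆ = ⁅⁅t, S.x⁆, S.y⁆ + ⁅S.x, ⁅t, S.y⁆⁆ := by rw [← leibniz_lie, S.lie_x_y]
      _ = q • S.w := by rw [hp, hq]; simp [S.lie_w, S.lie_x_z, hzy, hwy]
  rw [S.α_apply, h, map_smul, S.ω_w, smul_eq_mul, mul_one]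

theorem lie_x (t : T) : ⁅S.x, t⁆ = S.β t • S.z + S.γ t • S.w := by
  obtain ⟨p, hp⟩ := S.exists_lie_eq S.x t
  have hβ : S.β t = p := by
    rw [S.β_apply, hp]
    simp [S.lie_w, S.lie_x_z, S.ω_w]
  rw [hβ, S.γ_apply, ← hp]

theorem lie_y (t : T) : ⁅S.y, t⁆ = -S.α t • S.z + S.κ t • S.w := by
  obtain ⟨p, hp⟩ := S.exists_lie_eq S.y t
  have hα : p • S.w = -S.α t • S.w :=
    calc p • S.w = ⁅S.x, ⁅S.y, t⁆⁆ := by rw [hp]; simp [S.lie_w, S.lie_x_z]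
      _ = ⁅S.z, t⁆ + ⁅S.y, ⁅S.x, t⁆⁆ := by rw [leibniz_lie, S.lie_x_y]
      _ = -S.α t • S.w := by
        rw [← lie_skew, S.lie_z, S.lie_x]
        simp [S.lie_w, S.lie_y_z]
  rw [← smul_left_injective F S.w_ne_zero hα, S.κ_apply, ← hp]

@[simp] theorem α_x : S.α S.x = 1 := by rw [α_apply, S.lie_x_z, S.ω_w]
@[simp] theorem α_y : S.α S.y = 0 := by rw [α_apply, S.lie_y_z, map_zero]
@[simp] theorem α_z : S.α S.z = 0 := by rw [α_apply, lie_self, map_zero]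

@[simp] theorem α_w : S.α S.w = 0 := by
  rw [α_apply, lie_eq_zero_of_mem_center_left S.w_mem_center, map_zero]

@[simp] theorem β_x : S.β S.x = 0 := by simp [β_apply]
@[simp] theorem β_y : S.β S.y = 1 := by simp [β_apply, S.lie_x_y, S.lie_x_z, S.ω_w]
@[simp] theorem β_z : S.β S.z = 0 := by simp [β_apply, S.lie_x_z, S.lie_w]

@[simp] theorem γ_x : S.γ S.x = 0 := by simp [γ_apply]
@[simp] theorem γ_y : S.γ S.y = 0 := by simp [γ_apply, S.lie_x_y, S.ω_z]
@[simp] theorem γ_z : S.γ S.z = 1 := by simp [γ_apply, S.lie_x_z, S.ω_w]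
@[simp] theorem γ_w : S.γ S.w = 0 := by simp [γ_apply, S.lie_w]

@[simp] theorem κ_x : S.κ S.x = 0 := by
  rw [κ_apply, ← lie_skew, S.lie_x_y, map_neg, S.ω_z, neg_zero]
@[simp] theorem κ_y : S.κ S.y = 0 := by simp [κ_apply]
@[simp] theorem κ_z : S.κ S.z = 0 := by simp [κ_apply, S.lie_y_z]
@[simp] theorem κ_w : S.κ S.w = 0 := by simp [κ_apply, S.lie_w]

/-- The coordinates `(α, β, γ)` with respect to `x`, `y` and `z`. -/
def coords : T →ₗ[F] F × F × F := S.α.prod (S.β.prod S.γ)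

/-- The subspace `D` of the elements with vanishing coordinates, a complement of `⟨x, y, z⟩`. It is
the centralizer of `x` and `z`. -/
def complement : Submodule F T := S.coords.ker

variable {S} in
theorem mem_complement_iff {t : T} : t ∈ S.complement ↔ S.α t = 0 ∧ S.β t = 0 ∧ S.γ t = 0 := by
  simp [complement, coords]

theorem center_le_complement : (LieAlgebra.center F T).toSubmodule ≤ S.complement := fun t ht => by
  simp [mem_complement_iff, α_apply, β_apply, γ_apply, lie_eq_zero_of_mem_center ht,
    lie_eq_zero_of_mem_center_left ht]

variable {S}

theorem lie_x_eq_zero_of_mem_complement {d : T} (hd : d ∈ S.complement) : ⁅S.x, d⁆ = 0 := by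
  rw [S.lie_x, (mem_complement_iff.1 hd).2.1, (mem_complement_iff.1 hd).2.2, zero_smul, zero_smul,
    add_zero]

theorem lie_y_of_mem_complement {d : T} (hd : d ∈ S.complement) : ⁅S.y, d⁆ = S.κ d • S.w := by
  rw [S.lie_y, (mem_complement_iff.1 hd).1, neg_zero, zero_smul, zero_add]

theorem lie_z_eq_zero_of_mem_complement {d : T} (hd : d ∈ S.complement) : ⁅d, S.z⁆ = 0 := by
  rw [S.lie_z, (mem_complement_iff.1 hd).1, zero_smul]

theorem lie_eq_of_mem_complement {d e : T} (hd : d ∈ S.complement) (he : e ∈ S.complement) :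
    ⁅d, e⁆ = S.ω ⁅d, e⁆ • S.w := by
  obtain ⟨p, hp⟩ := S.exists_lie_eq d e
  have h : p • S.w = 0 :=
    calc p • S.w = ⁅S.x, ⁅d, e⁆⁆ := by rw [hp]; simp [S.lie_w, S.lie_x_z]
      _ = 0 := by simp [leibniz_lie, lie_x_eq_zero_of_mem_complement, hd, he]
  rwa [(smul_eq_zero_iff_left S.w_ne_zero).1 h, zero_smul, zero_add] at hp

variable (S)

/-- The `D`-component of `t` in the decomposition `T = ⟨x, y, z⟩ ⊕ D`. -/
def residue (t : T) : T := t - (S.α t • S.x + S.β t • S.y + S.γ t • S.z)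

theorem residue_mem_complement (t : T) : S.residue t ∈ S.complement := by
  simp [mem_complement_iff, residue]

theorem eq_add_residue (t : T) : t = S.α t • S.x + S.β t • S.y + S.γ t • S.z + S.residue t :=
  (add_sub_cancel _ t).symm

theorem κ_residue (t : T) : S.κ (S.residue t) = S.κ t := by
  simp [residue]

theorem lie_residue (s t : T) :
    ⁅s, S.residue t⁆ = (S.β s * S.κ t) • S.w + ⁅S.residue s, S.residue t⁆ := by
  have ht := S.residue_mem_complement t
  have hz : ⁅S.z, S.residue t⁆ = 0 := by
    rw [← lie_skew, lie_z_eq_zero_of_mem_complement ht, neg_zero]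
  nth_rw 1 [S.eq_add_residue s]
  simp [lie_x_eq_zero_of_mem_complement ht, lie_y_of_mem_complement ht, hz, S.κ_residue, mul_smul]

theorem lie_eq (s t : T) :
    ⁅s, t⁆ = (S.α s * S.β t - S.α t * S.β s) • S.z +
      (S.α s * S.γ t - S.α t * S.γ s + S.β s * S.κ t - S.β t * S.κ s) • S.w +
        ⁅S.residue s, S.residue t⁆ := by
  have hx : ⁅s, S.x⁆ = -(S.β s • S.z + S.γ s • S.w) := by rw [← lie_skew, S.lie_x]
  have hy : ⁅s, S.y⁆ = -(-S.α s • S.z + S.κ s • S.w) := by rw [← lie_skew, S.lie_y]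
  nth_rw 1 [S.eq_add_residue t]
  simp only [lie_add, lie_smul, hx, hy, S.lie_z, S.lie_residue s t]
  module

/-- The complement `D` is abelian: the bracket-theoretic form of capability. -/
def ComplementIsAbelian : Prop := ∀ d ∈ S.complement, ∀ e ∈ S.complement, ⁅d, e⁆ = 0

end Coordinates

section Capable

variable {F T : Type u} [Field F] [LieRing T] [LieAlgebra F T] {S : StemFrame F T}

variable (S) in
/-- The alternating form `α ∧ ω + γ ∧ κ`, the `2`-cocycle of a central extension of `T` in which `w`
does not lift to a central element. -/
def form : T →ₗ[F] T →ₗ[F] F :=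
  S.α.smulRight S.ω - S.ω.smulRight S.α + (S.γ.smulRight S.κ - S.κ.smulRight S.γ)

theorem form_apply (s t : T) :
    S.form s t = S.α s * S.ω t - S.ω s * S.α t + (S.γ s * S.κ t - S.κ s * S.γ t) := by
  simp [form]

-- `α` and `κ` vanish on brackets, while `dγ = -α ∧ β` and `dω = -(α ∧ γ + β ∧ κ)`; hence
-- `d(α ∧ ω)` and `d(γ ∧ κ)` are multiples of `α ∧ β ∧ κ` that cancel.
theorem form_lie (h : S.ComplementIsAbelian) (r s t : T) :
    S.form r ⁅s, t⁆ = S.form ⁅r, s⁆ t + S.form s ⁅r, t⁆ := by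
  have bracket (s t : T) : ⁅s, t⁆ = (S.α s * S.β t - S.α t * S.β s) • S.z +
      (S.α s * S.γ t - S.α t * S.γ s + S.β s * S.κ t - S.β t * S.κ s) • S.w := by
    rw [S.lie_eq, h _ (S.residue_mem_complement s) _ (S.residue_mem_complement t), add_zero]
  have α_lie (s t : T) : S.α ⁅s, t⁆ = 0 := by simp [bracket]
  have κ_lie (s t : T) : S.κ ⁅s, t⁆ = 0 := by simp [bracket]
  have γ_lie (s t : T) : S.γ ⁅s, t⁆ = S.α s * S.β t - S.α t * S.β s := by simp [bracket]
  have ω_lie (s t : T) : S.ω ⁅s, t⁆ =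
      S.α s * S.γ t - S.α t * S.γ s + S.β s * S.κ t - S.β t * S.κ s := by
    simp [bracket, S.ω_z, S.ω_w]
  simp only [form_apply, α_lie, κ_lie, γ_lie, ω_lie]
  ring

open LieModule.Cohomology in
theorem isCapable_of_complementIsAbelian (h : S.ComplementIsAbelian) : IsCapable F T := by
  let e : F ≃ₗ[F] TrivialLieModule F T F := (TrivialLieModule.equiv F T F).symm
  let c : twoCochain F T (TrivialLieModule F T F) :=
    ⟨S.form.compr₂ e.toLinearMap, fun t => by simp [form_apply, mul_comm]⟩
  have hc : c ∈ twoCocycle F T (TrivialLieModule F T F) := by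
    rw [mem_twoCocycle_iff_of_trivial]
    exact fun r s t => (congrArg e (S.form_lie h r s t)).trans (map_add e _ _)
  refine isCapable_of_twoCocycle ⟨c, hc⟩ fun t ht ht' => ?_
  obtain ⟨a, rfl⟩ := S.mem_center_iff.1 ht
  have hform : S.form S.x (a • S.w) = 0 := e.map_eq_zero_iff.1 (ht' S.x)
  have ha : a = 0 := by simpa [form_apply, S.ω_w] using hform
  rw [ha, zero_smul]

theorem mem_center_of_lie_lift_x_eq_zero {E : Type*} [LieRing E] [LieAlgebra F E]
    {π : E →ₗ⁅F⁆ T} (hsurj : Function.Surjective π) (hπ : π.ker ≤ LieAlgebra.center F E)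
    {X W : E} (hX : π X = S.x) (hW : π W = S.w) (hXW : ⁅X, W⁆ = 0) :
    W ∈ LieAlgebra.center F E := by
  obtain ⟨Y, hY⟩ := hsurj S.y
  have hZ : π ⁅X, Y⁆ = S.z := by rw [LieHom.map_lie, hX, hY, S.lie_x_y]
  have hXZ (e : E) : ⁅e, W⁆ = ⁅e, ⁅X, ⁅X, Y⁆⁆⁆ :=
    lie_eq_lie_of_map_eq hπ (by rw [hW, LieHom.map_lie, hX, hZ, S.lie_x_z]) e
  have hYZ : ⁅Y, ⁅X, Y⁆⁆ ∈ LieAlgebra.center F E :=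
    hπ (by rw [LieHom.mem_ker, LieHom.map_lie, hY, hZ, S.lie_y_z])
  have hYW : ⁅Y, W⁆ = 0 := by
    rw [hXZ, leibniz_lie, lie_eq_zero_of_mem_center hYZ, ← lie_skew X Y, lie_neg, lie_self,
      neg_zero, add_zero]
  have hZW : ⁅⁅X, Y⁆, W⁆ = 0 := by rw [lie_lie, hYW, hXW, lie_zero, lie_zero, sub_zero]
  refine (LieModule.mem_maxTrivSubmodule F E E W).2 fun e => ?_
  obtain ⟨D, hD⟩ := hsurj (S.residue (π e))
  have hDW : ⁅D, W⁆ = 0 := by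
    have hmem : π D ∈ S.complement := hD ▸ S.residue_mem_complement _
    rw [hXZ]
    refine lie_lie_eq_zero_of_map_lie_eq_zero hπ ?_ ?_
    · rw [hX, ← lie_skew, lie_x_eq_zero_of_mem_complement hmem, neg_zero]
    · rw [hZ, lie_z_eq_zero_of_mem_complement hmem]
  have he : π e = π (S.α (π e) • X + S.β (π e) • Y + S.γ (π e) • ⁅X, Y⁆ + D) := by
    simp only [map_add, map_smul, hX, hY, hZ, hD]
    exact S.eq_add_residue (π e)
  rw [← lie_skew, lie_eq_lie_of_map_eq hπ he, lie_skew]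
  simp only [add_lie, smul_lie, hXW, hYW, hZW, hDW, smul_zero, add_zero]

theorem complementIsAbelian_of_isCapable (h : IsCapable F T) : S.ComplementIsAbelian := by
  obtain ⟨E, _, _, π, hsurj, hker⟩ := isCapable_iff_exists_surjective_ker_eq_center.1 h
  obtain ⟨X, hX⟩ := hsurj S.x
  obtain ⟨W, hW⟩ := hsurj S.w
  intro d hd e he
  by_contra hde
  rw [lie_eq_of_mem_complement hd he, smul_eq_zero_iff_left S.w_ne_zero] at hde
  obtain ⟨D₁, rfl⟩ := hsurj d
  obtain ⟨D₂, rfl⟩ := hsurj e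
  have hXW : S.ω ⁅π D₁, π D₂⁆ • ⁅X, W⁆ = 0 :=
    calc S.ω ⁅π D₁, π D₂⁆ • ⁅X, W⁆ = ⁅X, S.ω ⁅π D₁, π D₂⁆ • W⁆ := (lie_smul _ _ _).symm
      _ = ⁅X, ⁅D₁, D₂⁆⁆ := lie_eq_lie_of_map_eq hker.le
        (by rw [map_smul, hW, LieHom.map_lie, ← lie_eq_of_mem_complement hd he]) X
      _ = 0 := lie_lie_eq_zero_of_map_lie_eq_zero hker.le
        (by rw [hX, lie_x_eq_zero_of_mem_complement hd])
        (by rw [hX, lie_x_eq_zero_of_mem_complement he])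
  have hWc : W ∈ LieAlgebra.center F E := S.mem_center_of_lie_lift_x_eq_zero hsurj hker.le hX hW
    ((smul_eq_zero_iff_right hde).1 hXW)
  rw [← hker, LieHom.mem_ker, hW] at hWc
  exact S.w_ne_zero hWc

theorem isCapable_iff_complementIsAbelian : IsCapable F T ↔ S.ComplementIsAbelian :=
  ⟨S.complementIsAbelian_of_isCapable, S.isCapable_of_complementIsAbelian⟩

end Capable

section Dimension

variable {F T : Type u} [Field F] [LieRing T] [LieAlgebra F T] (S : StemFrame F T)

theorem coords_surjective : Function.Surjective S.coords := fun ⟨a, b, c⟩ =>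
  ⟨a • S.x + b • S.y + c • S.z, by simp [coords]⟩

/-- The image `D/Z(T)` of the complement `D` in the central quotient. -/
def complementModCenter : Submodule F (T ⧸ LieAlgebra.center F T) :=
  S.complement.map (LieAlgebra.center F T).toSubmodule.mkQ

theorem rank_quotient_center :
    Module.rank F (T ⧸ LieAlgebra.center F T) = Module.rank F S.complementModCenter + 3 := by
  let f : (T ⧸ LieAlgebra.center F T) →ₗ[F] F × F × F :=
    (LieAlgebra.center F T).toSubmodule.liftQ S.coords S.center_le_complement
  have hf : Function.Surjective f := fun v =>
    let ⟨t, ht⟩ := S.coords_surjective v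
    ⟨LieSubmodule.Quotient.mk t, ht⟩
  have hker : f.ker = S.complementModCenter := Submodule.ker_liftQ _ _ _
  have h3 : Module.rank F (F × F × F) = 3 := by
    rw [← finrank_eq_rank]; simp
  rw [LinearMap.rank_eq_of_surjective hf, h3, hker, add_comm]

variable {S}

theorem mem_center_of_κ_eq_zero (h : S.ComplementIsAbelian) {d : T} (hd : d ∈ S.complement)
    (hκ : S.κ d = 0) : d ∈ LieAlgebra.center F T := by
  obtain ⟨hα, hβ, hγ⟩ := mem_complement_iff.1 hd
  refine (LieModule.mem_maxTrivSubmodule F T T d).2 fun s => ?_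
  rw [S.lie_eq, h _ (S.residue_mem_complement s) _ (S.residue_mem_complement d)]
  simp [hα, hβ, hγ, hκ]

theorem rank_complementModCenter_le_one (h : S.ComplementIsAbelian) :
    Module.rank F S.complementModCenter ≤ 1 := by
  let f : (T ⧸ LieAlgebra.center F T) →ₗ[F] F :=
    (LieAlgebra.center F T).toSubmodule.liftQ S.κ fun t ht => by
      simp [κ_apply, lie_eq_zero_of_mem_center ht]
  have hf : Function.Injective (f.domRestrict S.complementModCenter) := by
    rw [injective_iff_map_eq_zero]
    rintro ⟨_, d, hd, rfl⟩ hκ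
    exact Subtype.ext (LieSubmodule.Quotient.mk_eq_zero'.2 (mem_center_of_κ_eq_zero h hd hκ))
  simpa using LinearMap.rank_le_of_injective _ hf

theorem complementIsAbelian_of_rank_le_one (h : Module.rank F S.complementModCenter ≤ 1) :
    S.ComplementIsAbelian := by
  obtain ⟨_, ⟨e, _, rfl⟩, he⟩ := (rank_submodule_le_one_iff _).1 h
  have exists_eq (d : T) (hd : d ∈ S.complement) : ∃ a c : F, d = a • e + c • S.w := by
    obtain ⟨a, ha⟩ := Submodule.mem_span_singleton.1 (he (Submodule.mem_map_of_mem hd))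
    have hsub : d - a • e ∈ LieAlgebra.center F T := (Submodule.Quotient.eq _).1 ha.symm
    obtain ⟨c, hc⟩ := S.mem_center_iff.1 hsub
    exact ⟨a, c, by rw [hc, add_sub_cancel]⟩
  intro d hd d' hd'
  obtain ⟨a, c, rfl⟩ := exists_eq d hd
  obtain ⟨b, c', rfl⟩ := exists_eq d' hd'
  simp [S.lie_w, lie_eq_zero_of_mem_center_left S.w_mem_center]

theorem isCapable_iff_rank_quotient_center (S : StemFrame F T) : IsCapable F T ↔
    3 ≤ Module.rank F (T ⧸ LieAlgebra.center F T) ∧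
      Module.rank F (T ⧸ LieAlgebra.center F T) ≤ 4 := by
  have h4 : (4 : Cardinal) = 1 + 3 := by norm_num
  rw [isCapable_iff_complementIsAbelian (S := S), S.rank_quotient_center, h4,
    Cardinal.add_le_add_iff_of_lt_aleph0 Cardinal.ofNat_lt_aleph0]
  exact ⟨fun h => ⟨self_le_add_left _ _, rank_complementModCenter_le_one h⟩,
    fun h => complementIsAbelian_of_rank_le_one h.2⟩

end Dimension

end StemFrame

section Existence

variable {F L : Type*} [Field F] [LieRing L] [LieAlgebra F L]

theorem nonempty_stemFrame (h2 : LieModule.lowerCentralSeries F L L 2 ≠ ⊥)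
    (h3 : LieModule.lowerCentralSeries F L L 3 = ⊥)
    (hder : finrank F ↥(LieModule.lowerCentralSeries F L L 1) = 2)
    (hstem : LieAlgebra.center F L ≤ LieModule.lowerCentralSeries F L L 1) :
    Nonempty (StemFrame F L) := by
  obtain ⟨x, y, hxy⟩ := exists_lie_lie_self_ne_zero h2 h3 hder
  have hz : ⁅x, y⁆ ∈ LieModule.lowerCentralSeries F L L 1 := lie_mem_lowerCentralSeries_one x y
  have hspan := span_pair_lie_eq_lowerCentralSeries_one h3 hder hz hxy
  have hcenter := center_eq_span_lie h3 hder hstem hz hxy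
  have hyz : ⁅y, ⁅x, y⁆⁆ ∈ LieAlgebra.center F L :=
    lie_mem_center_of_lowerCentralSeries_eq_bot h3 hz y
  rw [← LieSubmodule.mem_toSubmodule, hcenter] at hyz
  obtain ⟨a, ha⟩ := Submodule.mem_span_singleton.1 hyz
  have hxw : ⁅x, ⁅x, ⁅x, y⁆⁆⁆ = 0 :=
    lie_eq_zero_of_mem_center (R := F) (hcenter.ge (Submodule.mem_span_singleton_self _)) x
  obtain ⟨ω, hω⟩ := exists_dual_apply_eq (F := F) (linearIndependent_pair_lie hxy hxw) ![0, 1]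
  exact ⟨{
    x := x
    y := y - a • x
    z := ⁅x, y⁆
    w := ⁅x, ⁅x, y⁆⁆
    ω := ω
    lie_x_y := by simp
    lie_x_z := rfl
    lie_y_z := by simp [← ha]
    ω_z := hω 0
    ω_w := hω 1
    center_eq := hcenter
    lie_mem_span := fun s t => hspan.ge (lie_mem_lowerCentralSeries_one s t) }⟩

end Existence

theorem stem_class_three_capable_iff_central_quotient_dim_general
    (F T : Type u) [Field F] [LieRing T] [LieAlgebra F T]
    (hclass : LieModule.lowerCentralSeries F T T 2 ≠ ⊥ ∧ LieModule.lowerCentralSeries F T T 3 = ⊥)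
    (hder : finrank F ↥(LieModule.lowerCentralSeries F T T 1) = 2)
    (hstem : LieAlgebra.center F T ≤ LieModule.lowerCentralSeries F T T 1) :
    IsCapable F T ↔
      3 ≤ Module.rank F (T ⧸ LieAlgebra.center F T) ∧
        Module.rank F (T ⧸ LieAlgebra.center F T) ≤ 4 :=
  let ⟨S⟩ := nonempty_stemFrame hclass.1 hclass.2 hder hstem
  S.isCapable_iff_rank_quotient_center

/-- A finite-dimensional stem nilpotent Lie algebra of class 3 with 2-dimensional derived
subalgebra is capable iff `3 ≤ dim T/Z(T) ≤ 4`. -/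
theorem stem_class_three_capable_iff_central_quotient_dim
    (F T : Type u) [Field F] [LieRing T] [LieAlgebra F T] [FiniteDimensional F T]
    (hclass : LieModule.lowerCentralSeries F T T 2 ≠ ⊥ ∧ LieModule.lowerCentralSeries F T T 3 = ⊥)
    (hder : finrank F ↥(LieModule.lowerCentralSeries F T T 1) = 2)
    (hstem : LieAlgebra.center F T ≤ LieModule.lowerCentralSeries F T T 1) :
    IsCapable F T ↔
      3 ≤ finrank F (T ⧸ LieAlgebra.center F T) ∧
        finrank F (T ⧸ LieAlgebra.center F T) ≤ 4 := by
  simpa [← finrank_eq_rank] using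
    stem_class_three_capable_iff_central_quotient_dim_general F T hclass hder hstem
end

section
/- Let L be a 5-dimensional nilpotent Lie algebra over a field F of nilpotency class 3 with dim [L,L] = 2 such that L is stem (i.e. Z(L) ⊆ [L,L]). Then L is isomorphic to the Lie algebra L_{5,5} over F with basis x₁,…,x₅ and nonzero brackets [x₁,x₂] = x₃, [x₁,x₃] = x₅, [x₂,x₄] = x₅. -/
open Module

universe u

/-- `L` is isomorphic to `L_{5,5}`: basis `x₁,…,x₅` with `[x₁,x₂]=x₃`, `[x₁,x₃]=x₅`, `[x₂,x₄]=x₅`. -/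
def IsL55 (F : Type u) (L : Type u) [Field F] [LieRing L] [LieAlgebra F L] : Prop :=
  ∃ b : Basis (Fin 5) F L,
    ⁅b 0, b 1⁆ = b 2 ∧
    ⁅b 0, b 2⁆ = b 4 ∧
    ⁅b 1, b 3⁆ = b 4 ∧
    ∀ i j : Fin 5, i < j → (i, j) ≠ (0, 1) → (i, j) ≠ (0, 2) → (i, j) ≠ (1, 3) → ⁅b i, b j⁆ = 0

/-!
Let `C` be the centralizer of `L²`. Since `L³` is a central line in the plane `L²`, an `x ∉ C`
spans `L` modulo `C`, and an element of `L²` that commutes with `x` lies in `L³`. By the Jacobi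
identity `x` commutes with `[C, C]`, so `[C, C] ⊆ L³`; as `L² ⊄ L³`, there is `y ∈ C` with
`[x, y] ∉ L³`. The elements `x`, `y`, `[x, y]`, `[x, [x, y]]` span a hyperplane, and any vector
outside it can be corrected by this hyperplane to a `w` that commutes with `x` and `[x, y]`. If `w`
also commuted with `y` it would be central, contradicting stemness; hence `[y, w]` spans `L³`, and
rescaling `w` gives the relations of `L_{5,5}`.
-/

section LinearAlgebra

variable {K V W : Type*} [Field K] [AddCommGroup V] [Module K V] [AddCommGroup W] [Module K W]

lemma exists_smul_eq_of_mem_of_finrank_eq_one {N : Submodule K V} (hN : finrank K N = 1)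
    {u v : V} (hu : u ∈ N) (hu₀ : u ≠ 0) (hv : v ∈ N) : ∃ c : K, c • u = v := by
  obtain ⟨c, hc⟩ := exists_smul_eq_of_finrank_eq_one hN (x := ⟨u, hu⟩) (by simpa using hu₀) ⟨v, hv⟩
  exact ⟨c, congrArg Subtype.val hc⟩

lemma eq_of_lt_of_le_of_finrank_eq_succ {N U P : Submodule K V}
    (hNU : N < U) (hUP : U ≤ P) (hrank : finrank K P = finrank K N + 1) : U = P := by
  have : FiniteDimensional K P := .of_finrank_eq_succ hrank
  have : FiniteDimensional K U := Submodule.finiteDimensional_of_le hUP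
  exact Submodule.eq_of_le_of_finrank_le hUP
    (hrank.trans_le (Submodule.finrank_lt_finrank_of_lt hNU))

lemma mem_of_map_eq_zero_of_finrank_eq_succ {f : V →ₗ[K] W} {N P : Submodule K V}
    (hNP : N ≤ P) (hNf : N ≤ LinearMap.ker f) (hrank : finrank K P = finrank K N + 1)
    {d e : V} (hd : d ∈ P) (hfd : f d ≠ 0) (he : e ∈ P) (hfe : f e = 0) : e ∈ N := by
  by_contra heN
  have hlt : N < P ⊓ LinearMap.ker f :=
    SetLike.lt_iff_le_and_exists.2 ⟨le_inf hNP hNf, e, Submodule.mem_inf.2 ⟨he, hfe⟩, heN⟩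
  have hP : P ⊓ LinearMap.ker f = P :=
    eq_of_lt_of_le_of_finrank_eq_succ hlt inf_le_left hrank
  exact hfd (hP.ge hd).2

end LinearAlgebra

section LowerCentralSeries

open LieModule

variable {R L M : Type*} [CommRing R] [LieRing L] [LieAlgebra R L] [AddCommGroup M] [Module R M]
  [LieRingModule L M] {k : ℕ}

lemma lie_mem_lowerCentralSeries_succ_s4 (x : L) {m : M} (hm : m ∈ lowerCentralSeries R L M k) :
    ⁅x, m⁆ ∈ lowerCentralSeries R L M (k + 1) := by
  rw [lowerCentralSeries_succ]
  exact LieSubmodule.lie_mem_lie (LieSubmodule.mem_top x) hm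

lemma lowerCentralSeries_succ_le_iff {N : LieSubmodule R L M} :
    lowerCentralSeries R L M (k + 1) ≤ N ↔
      ∀ x : L, ∀ m ∈ lowerCentralSeries R L M k, ⁅x, m⁆ ∈ N := by
  simp only [lowerCentralSeries_succ, LieSubmodule.lie_le_iff, LieSubmodule.mem_top, true_imp_iff]

lemma lie_eq_zero_of_mem_lowerCentralSeries (hbot : lowerCentralSeries R L M (k + 1) = ⊥)
    (x : L) {m : M} (hm : m ∈ lowerCentralSeries R L M k) : ⁅x, m⁆ = 0 :=
  (LieSubmodule.mem_bot _).1 (hbot ▸ lie_mem_lowerCentralSeries_succ_s4 x hm)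

lemma lowerCentralSeries_succ_lt (hne : lowerCentralSeries R L M (k + 1) ≠ ⊥)
    (hbot : lowerCentralSeries R L M (k + 2) = ⊥) :
    lowerCentralSeries R L M (k + 1) < lowerCentralSeries R L M k := by
  refine (antitone_lowerCentralSeries R L M k.le_succ).lt_of_not_ge fun hle => hne ?_
  refine le_bot_iff.1 (lowerCentralSeries_succ_le_iff.2 fun x m hm => ?_)
  exact (LieSubmodule.mem_bot _).2 (lie_eq_zero_of_mem_lowerCentralSeries hbot x (hle hm))

variable [LieModule R L M]

lemma mem_ker_lieSubmodule_iff {N : LieSubmodule R L M} {x : L} :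
    x ∈ LieModule.ker R L N ↔ ∀ m ∈ N, ⁅x, m⁆ = 0 := by
  simp [LieModule.mem_ker, Subtype.ext_iff]

lemma exists_notMem_ker_lowerCentralSeries (hne : lowerCentralSeries R L M (k + 1) ≠ ⊥) :
    ∃ x : L, x ∉ LieModule.ker R L (lowerCentralSeries R L M k) := by
  by_contra! hker
  refine hne (le_bot_iff.1 (lowerCentralSeries_succ_le_iff.2 fun x m hm => ?_))
  exact (LieSubmodule.mem_bot _).2 (mem_ker_lieSubmodule_iff.1 (hker x) m hm)

end LowerCentralSeries

section Finrank

open LieModule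

variable {F L M : Type*} [Field F] [LieRing L] [LieAlgebra F L] [AddCommGroup M] [Module F M]
  [LieRingModule L M] {k : ℕ}

lemma finrank_lowerCentralSeries_succ_eq_one (htwo : finrank F (lowerCentralSeries F L M k) = 2)
    (hne : lowerCentralSeries F L M (k + 1) ≠ ⊥) (hbot : lowerCentralSeries F L M (k + 2) = ⊥) :
    finrank F (lowerCentralSeries F L M (k + 1)) = 1 := by
  have hlt := lowerCentralSeries_succ_lt hne hbot
  have : FiniteDimensional F (lowerCentralSeries F L M k).toSubmodule := .of_finrank_eq_succ htwo
  have : FiniteDimensional F (lowerCentralSeries F L M (k + 1)).toSubmodule :=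
    Submodule.finiteDimensional_of_le hlt.le
  have hle : finrank F (lowerCentralSeries F L M (k + 1)) < 2 :=
    htwo ▸ Submodule.finrank_lt_finrank_of_lt (by exact hlt)
  have hpos : 1 ≤ finrank F (lowerCentralSeries F L M (k + 1)) :=
    Submodule.one_le_finrank_iff.2 (by simpa using hne)
  omega

variable [LieModule F L M] {x : L}
  (hrank : finrank F (lowerCentralSeries F L M k) =
    finrank F (lowerCentralSeries F L M (k + 1)) + 1)
  (hbot : lowerCentralSeries F L M (k + 2) = ⊥)
  (hx : x ∉ LieModule.ker F L (lowerCentralSeries F L M k))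

include hrank hbot hx

lemma mem_lowerCentralSeries_succ_of_lie_eq_zero {m : M} (hm : m ∈ lowerCentralSeries F L M k)
    (hxm : ⁅x, m⁆ = 0) : m ∈ lowerCentralSeries F L M (k + 1) := by
  obtain ⟨d, hd, hxd⟩ : ∃ d ∈ lowerCentralSeries F L M k, ⁅x, d⁆ ≠ 0 := by
    simpa only [mem_ker_lieSubmodule_iff, not_forall, exists_prop] using hx
  exact mem_of_map_eq_zero_of_finrank_eq_succ (f := toEnd F L M x)
    (antitone_lowerCentralSeries F L M k.le_succ)
    (fun n hn => lie_eq_zero_of_mem_lowerCentralSeries hbot x hn) hrank hd hxd hm hxm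

lemma exists_sub_smul_mem_ker_lowerCentralSeries
    (hone : finrank F (lowerCentralSeries F L M (k + 1)) = 1) (r : L) :
    ∃ c : F, r - c • x ∈ LieModule.ker F L (lowerCentralSeries F L M k) := by
  obtain ⟨d, hd, hxd⟩ : ∃ d ∈ lowerCentralSeries F L M k, ⁅x, d⁆ ≠ 0 := by
    simpa only [mem_ker_lieSubmodule_iff, not_forall, exists_prop] using hx
  obtain ⟨c, hc⟩ := exists_smul_eq_of_mem_of_finrank_eq_one hone
    (lie_mem_lowerCentralSeries_succ_s4 x hd) hxd (lie_mem_lowerCentralSeries_succ_s4 r hd)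
  refine ⟨c, by_contra fun hker => hxd ?_⟩
  have hsub : ⁅r - c • x, d⁆ = 0 := by rw [sub_lie, smul_lie, hc, sub_self]
  exact lie_eq_zero_of_mem_lowerCentralSeries hbot x
    (mem_lowerCentralSeries_succ_of_lie_eq_zero hrank hbot hker hd hsub)

end Finrank

section IteratedBracket

variable {L : Type*} [LieRing L] {x y : L}

lemma lie_lie_lie_eq_zero (hy : ⁅y, ⁅x, y⁆⁆ = 0) : ⁅y, ⁅x, ⁅x, y⁆⁆⁆ = 0 := by
  rw [leibniz_lie, hy, ← lie_skew y x, neg_lie, lie_self, lie_zero, neg_zero, add_zero]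

variable {F : Type*} [Field F] [LieAlgebra F L]

lemma linearIndependent_of_filiform_relations (hy : ⁅y, ⁅x, y⁆⁆ = 0)
    (hne : ⁅x, ⁅x, y⁆⁆ ≠ 0) (hx : ⁅x, ⁅x, ⁅x, y⁆⁆⁆ = 0) :
    LinearIndependent F ![x, y, ⁅x, y⁆, ⁅x, ⁅x, y⁆⁆] := by
  have hyu := lie_lie_lie_eq_zero hy
  have hyx : ⁅y, x⁆ ≠ 0 := fun h => hne (by rw [← lie_skew x y, h, neg_zero, lie_zero])
  refine Fintype.linearIndependent_iff.2 fun a ha => ?_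
  replace ha : a 0 • x + a 1 • y + a 2 • ⁅x, y⁆ + a 3 • ⁅x, ⁅x, y⁆⁆ = 0 := by
    simpa [Fin.sum_univ_four] using ha
  have h₁ : a 1 = 0 := by simpa [hx, hne] using congrArg (fun v => ⁅x, ⁅x, v⁆⁆) ha
  have h₀ : a 0 = 0 := by simpa [hy, hyu, hyx] using congrArg (fun v => ⁅y, v⁆) ha
  have h₂ : a 2 = 0 := by simpa [h₁, hx, hne] using congrArg (fun v => ⁅x, v⁆) ha
  have h₃ : a 3 = 0 := by simpa [h₀, h₁, h₂, hne] using ha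
  simp [Fin.forall_fin_succ, h₀, h₁, h₂, h₃]

lemma linearIndependent_of_L55_relations {w : L} (hy : ⁅y, ⁅x, y⁆⁆ = 0) (hxw : ⁅x, w⁆ = 0)
    (hyw : ⁅y, w⁆ = ⁅x, ⁅x, y⁆⁆) (hne : ⁅x, ⁅x, y⁆⁆ ≠ 0) (hx : ⁅x, ⁅x, ⁅x, y⁆⁆⁆ = 0) :
    LinearIndependent F ![x, y, ⁅x, y⁆, w, ⁅x, ⁅x, y⁆⁆] := by
  have hyu := lie_lie_lie_eq_zero hy
  refine Fintype.linearIndependent_iff.2 fun a ha => ?_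
  replace ha :
      a 0 • x + a 1 • y + a 2 • ⁅x, y⁆ + a 3 • w + a 4 • ⁅x, ⁅x, y⁆⁆ = 0 := by
    simpa [Fin.sum_univ_five] using ha
  have h₁ : a 1 = 0 := by simpa [hx, hxw, hne] using congrArg (fun v => ⁅x, ⁅x, v⁆⁆) ha
  have h₂ : a 2 = 0 := by simpa [h₁, hx, hxw, hne] using congrArg (fun v => ⁅x, v⁆) ha
  have hxyx : ⁅x, ⁅y, x⁆⁆ ≠ 0 := fun h => hne (by rw [← lie_skew x y, lie_neg, h, neg_zero])
  have hyv : a 0 • ⁅y, x⁆ + a 3 • ⁅x, ⁅x, y⁆⁆ = 0 := by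
    simpa [hy, hyu, hyw] using congrArg (fun v => ⁅y, v⁆) ha
  have h₀ : a 0 = 0 := by
    simpa [hx, hxyx] using congrArg (fun v => ⁅x, v⁆) hyv
  have h₃ : a 3 = 0 := by simpa [h₀, hne] using hyv
  have h₄ : a 4 = 0 := by simpa [h₀, h₁, h₂, h₃, hne] using ha
  simp [Fin.forall_fin_succ, h₀, h₁, h₂, h₃, h₄]

end IteratedBracket

lemma isL55_of_relations {F L : Type u} [Field F] [LieRing L] [LieAlgebra F L]
    (hdim : finrank F L = 5) {x y w : L} (hy : ⁅y, ⁅x, y⁆⁆ = 0) (hxw : ⁅x, w⁆ = 0)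
    (hyw : ⁅y, w⁆ = ⁅x, ⁅x, y⁆⁆) (hne : ⁅x, ⁅x, y⁆⁆ ≠ 0) (hx : ⁅x, ⁅x, ⁅x, y⁆⁆⁆ = 0) :
    IsL55 F L := by
  have hyu := lie_lie_lie_eq_zero hy
  have hzw : ⁅⁅x, y⁆, w⁆ = 0 := by rw [lie_lie, hyw, hxw, hx, lie_zero, sub_zero]
  have hzu : ⁅⁅x, y⁆, ⁅x, ⁅x, y⁆⁆⁆ = 0 := by rw [lie_lie, hyu, hx, lie_zero, lie_zero, sub_zero]
  have hwx : ⁅w, x⁆ = 0 := by rw [← lie_skew, hxw, neg_zero]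
  have hwz : ⁅w, ⁅x, y⁆⁆ = 0 := by rw [← lie_skew, hzw, neg_zero]
  have hwu : ⁅w, ⁅x, ⁅x, y⁆⁆⁆ = 0 := by rw [leibniz_lie, hwx, hwz, zero_lie, lie_zero, add_zero]
  have hli : LinearIndependent F ![x, y, ⁅x, y⁆, w, ⁅x, ⁅x, y⁆⁆] :=
    linearIndependent_of_L55_relations hy hxw hyw hne hx
  let b := basisOfLinearIndependentOfCardEqFinrank hli (by rw [hdim, Fintype.card_fin])
  have hb : ⇑b = ![x, y, ⁅x, y⁆, w, ⁅x, ⁅x, y⁆⁆] :=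
    coe_basisOfLinearIndependentOfCardEqFinrank hli _
  refine ⟨b, ?_⟩
  rw [hb]
  refine ⟨rfl, rfl, hyw, fun i j hij h01 h02 h13 => ?_⟩
  fin_cases i <;> fin_cases j <;>
    first | assumption | simp at hij h01 h02 h13

lemma mem_center_of_notMem_of_finrank_eq_succ {F L : Type*} [Field F] [LieRing L]
    [LieAlgebra F L] {H : Submodule F L}
    (hrank : finrank F L = finrank F H + 1) {w : L} (hw : w ∉ H)
    (hwH : ∀ h ∈ H, ⁅w, h⁆ = 0) : w ∈ LieAlgebra.center F L := by
  have hlt : H < LinearMap.ker (LieAlgebra.ad F L w : L →ₗ[F] L) :=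
    SetLike.lt_iff_le_and_exists.2 ⟨fun h hh => hwH h hh, w, lie_self w, hw⟩
  have htop : LinearMap.ker (LieAlgebra.ad F L w : L →ₗ[F] L) = ⊤ :=
    eq_of_lt_of_le_of_finrank_eq_succ hlt le_top (by rwa [finrank_top])
  refine (LieModule.mem_maxTrivSubmodule F L L w).2 fun v => ?_
  have hwv : ⁅w, v⁆ = 0 := htop.ge (Submodule.mem_top (x := v))
  rw [← lie_skew, hwv, neg_zero]

section DerivedSubalgebra

open LieModule

variable {R L : Type*} [CommRing R] [LieRing L] [LieAlgebra R L]

lemma lie_mem_lowerCentralSeries_one_s4 (x y : L) : ⁅x, y⁆ ∈ lowerCentralSeries R L L 1 :=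
  lie_mem_lowerCentralSeries_succ_s4 x (LieSubmodule.mem_top y)

lemma lie_lie_mem_lowerCentralSeries_two (x y z : L) :
    ⁅x, ⁅y, z⁆⁆ ∈ lowerCentralSeries R L L 2 :=
  lie_mem_lowerCentralSeries_succ_s4 x (lie_mem_lowerCentralSeries_one_s4 y z)

lemma notMem_ker_of_lie_lie_ne_zero {x y z : L} (hne : ⁅x, ⁅y, z⁆⁆ ≠ 0) :
    x ∉ LieModule.ker R L (lowerCentralSeries R L L 1) := fun hx =>
  hne (mem_ker_lieSubmodule_iff.1 hx _ (lie_mem_lowerCentralSeries_one_s4 y z))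

end DerivedSubalgebra

section PlanarDerivedSubalgebra

open LieModule

variable {F L : Type*} [Field F] [LieRing L] [LieAlgebra F L]
  (hrank : finrank F (lowerCentralSeries F L L 1) = finrank F (lowerCentralSeries F L L 2) + 1)
  (hone : finrank F (lowerCentralSeries F L L 2) = 1)
  (hbot : lowerCentralSeries F L L 3 = ⊥)

include hrank hbot

lemma lie_mem_lowerCentralSeries_two_of_mem_ker {x a b : L}
    (hx : x ∉ LieModule.ker F L (lowerCentralSeries F L L 1))
    (ha : a ∈ LieModule.ker F L (lowerCentralSeries F L L 1))
    (hb : b ∈ LieModule.ker F L (lowerCentralSeries F L L 1)) :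
    ⁅a, b⁆ ∈ lowerCentralSeries F L L 2 := by
  have haxb : ⁅a, ⁅x, b⁆⁆ = 0 :=
    mem_ker_lieSubmodule_iff.1 ha _ (lie_mem_lowerCentralSeries_one_s4 x b)
  have hbxa : ⁅b, ⁅x, a⁆⁆ = 0 :=
    mem_ker_lieSubmodule_iff.1 hb _ (lie_mem_lowerCentralSeries_one_s4 x a)
  have hxab : ⁅x, ⁅a, b⁆⁆ = 0 := by
    rw [leibniz_lie, haxb, ← lie_skew ⁅x, a⁆ b, hbxa, neg_zero, add_zero]
  exact mem_lowerCentralSeries_succ_of_lie_eq_zero hrank hbot hx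
    (lie_mem_lowerCentralSeries_one_s4 a b) hxab

include hone

lemma exists_mem_ker_lie_notMem_lowerCentralSeries_two {x : L}
    (hx : x ∉ LieModule.ker F L (lowerCentralSeries F L L 1)) :
    ∃ y ∈ LieModule.ker F L (lowerCentralSeries F L L 1),
      ⁅x, y⁆ ∉ lowerCentralSeries F L L 2 := by
  by_contra! hxC
  have hle : lowerCentralSeries F L L 1 ≤ lowerCentralSeries F L L 2 := by
    refine lowerCentralSeries_succ_le_iff.2 fun a b _ => ?_
    obtain ⟨s, hs⟩ := exists_sub_smul_mem_ker_lowerCentralSeries hrank hbot hx hone a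
    obtain ⟨t, ht⟩ := exists_sub_smul_mem_ker_lowerCentralSeries hrank hbot hx hone b
    have hab : ⁅a, b⁆ = ⁅a - s • x, b - t • x⁆ + s • ⁅x, b - t • x⁆ - t • ⁅x, a - s • x⁆ := by
      simp only [lie_sub, sub_lie, lie_smul, smul_lie, lie_self, ← lie_skew a x]
      module
    rw [hab]
    exact sub_mem (add_mem (lie_mem_lowerCentralSeries_two_of_mem_ker hrank hbot hx hs ht)
      (SMulMemClass.smul_mem s (hxC _ ht))) (SMulMemClass.smul_mem t (hxC _ hs))
  have heq := le_antisymm hle (antitone_lowerCentralSeries F L L one_le_two)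
  rw [heq] at hrank
  omega

lemma exists_filiform_pair : ∃ x y : L, ⁅y, ⁅x, y⁆⁆ = 0 ∧ ⁅x, ⁅x, y⁆⁆ ≠ 0 := by
  have hne : lowerCentralSeries F L L 2 ≠ ⊥ := fun h => by
    rw [h] at hone
    exact zero_ne_one ((finrank_bot F L).symm.trans hone)
  obtain ⟨x, hx⟩ := exists_notMem_ker_lowerCentralSeries hne
  obtain ⟨y, hy, hxy⟩ := exists_mem_ker_lie_notMem_lowerCentralSeries_two hrank hone hbot hx
  have hz := lie_mem_lowerCentralSeries_one_s4 (R := F) x y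
  exact ⟨x, y, mem_ker_lieSubmodule_iff.1 hy _ hz, fun hu =>
    hxy (mem_lowerCentralSeries_succ_of_lie_eq_zero hrank hbot hx hz hu)⟩

variable {x y : L} (hy : ⁅y, ⁅x, y⁆⁆ = 0) (hu : ⁅x, ⁅x, y⁆⁆ ≠ 0)

include hy hu

lemma exists_mem_span_lie_sub_eq_zero (r : L) :
    ∃ h ∈ Submodule.span F (Set.range ![x, y, ⁅x, y⁆, ⁅x, ⁅x, y⁆⁆]),
      ⁅x, r - h⁆ = 0 ∧ ⁅⁅x, y⁆, r - h⁆ = 0 := by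
  have hz := lie_mem_lowerCentralSeries_one_s4 (R := F) x y
  have hx := notMem_ker_of_lie_lie_ne_zero (R := F) hu
  have hmultiple {v : L} (hv : v ∈ lowerCentralSeries F L L 2) : ∃ c : F, c • ⁅x, ⁅x, y⁆⁆ = v :=
    exists_smul_eq_of_mem_of_finrank_eq_one hone (lie_lie_mem_lowerCentralSeries_two x x y) hu hv
  obtain ⟨c, hc⟩ := hmultiple (lie_lie_mem_lowerCentralSeries_two r x y)
  obtain ⟨p, hp⟩ := hmultiple (lie_lie_mem_lowerCentralSeries_two x x r)
  obtain ⟨q, hq⟩ : ∃ q : F, q • ⁅x, ⁅x, y⁆⁆ = ⁅x, r⁆ - p • ⁅x, y⁆ := by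
    refine hmultiple (mem_lowerCentralSeries_succ_of_lie_eq_zero hrank hbot hx ?_ ?_)
    · exact sub_mem (lie_mem_lowerCentralSeries_one_s4 x r) (SMulMemClass.smul_mem p hz)
    · rw [lie_sub, lie_smul, hp, sub_self]
  have hspan (i : Fin 4) := Submodule.subset_span (R := F)
    (Set.mem_range_self (f := ![x, y, ⁅x, y⁆, ⁅x, ⁅x, y⁆⁆]) i)
  refine ⟨c • x + p • y + q • ⁅x, y⁆, ?_, ?_, ?_⟩
  · exact add_mem (add_mem (Submodule.smul_mem _ c (hspan 0)) (Submodule.smul_mem _ p (hspan 1)))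
      (Submodule.smul_mem _ q (hspan 2))
  · simp [hq]
  · rw [← lie_skew, neg_eq_zero]
    simp [sub_lie, ← hc, hy]

lemma exists_lie_eq_zero_lie_ne_zero (hdim : finrank F L = 5)
    (hstem : LieAlgebra.center F L ≤ lowerCentralSeries F L L 1) :
    ∃ w : L, ⁅x, w⁆ = 0 ∧ ⁅⁅x, y⁆, w⁆ = 0 ∧ ⁅y, w⁆ ≠ 0 := by
  have hx := notMem_ker_of_lie_lie_ne_zero (R := F) hu
  have huL := lie_lie_mem_lowerCentralSeries_two (R := F) x x y
  have hcentral (v : L) : ⁅v, ⁅x, ⁅x, y⁆⁆⁆ = 0 :=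
    lie_eq_zero_of_mem_lowerCentralSeries hbot v huL
  let H := Submodule.span F (Set.range ![x, y, ⁅x, y⁆, ⁅x, ⁅x, y⁆⁆])
  have hli := linearIndependent_of_filiform_relations (F := F) hy hu (hcentral x)
  have hHrank : finrank F H = 4 := by rw [finrank_span_eq_card hli, Fintype.card_fin]
  obtain ⟨r, hr⟩ : ∃ r, r ∉ H := by
    by_contra! htop
    rw [Submodule.eq_top_iff'.2 htop, finrank_top, hdim] at hHrank
    omega
  obtain ⟨h, hh, hxw, hzw⟩ := exists_mem_span_lie_sub_eq_zero hrank hone hbot hy hu r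
  have hwH : r - h ∉ H := fun hw => hr ((H.sub_mem_iff_left hh).1 hw)
  refine ⟨r - h, hxw, hzw, fun hyw => hwH ?_⟩
  have hH : H ≤ LinearMap.ker (LieAlgebra.ad F L (r - h) : L →ₗ[F] L) := by
    refine Submodule.span_le.2 (Set.range_subset_iff.2 fun i => ?_)
    have hcomm : ⁅![x, y, ⁅x, y⁆, ⁅x, ⁅x, y⁆⁆] i, r - h⁆ = 0 := by
      fin_cases i
      exacts [hxw, hyw, hzw, (lie_skew _ _).symm.trans (neg_eq_zero.2 (hcentral _))]
    exact (lie_skew _ _).symm.trans (neg_eq_zero.2 hcomm)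
  have hcenter : r - h ∈ LieAlgebra.center F L :=
    mem_center_of_notMem_of_finrank_eq_succ (by rw [hdim, hHrank]) hwH hH
  have hwL : r - h ∈ lowerCentralSeries F L L 2 :=
    mem_lowerCentralSeries_succ_of_lie_eq_zero hrank hbot hx (hstem hcenter) hxw
  obtain ⟨c, hc⟩ := exists_smul_eq_of_mem_of_finrank_eq_one hone huL hu hwL
  exact hc ▸ H.smul_mem c (Submodule.subset_span (Set.mem_range_self (3 : Fin 4)))

lemma exists_lie_eq_zero_lie_eq_lie_lie (hdim : finrank F L = 5)
    (hstem : LieAlgebra.center F L ≤ lowerCentralSeries F L L 1) :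
    ∃ w : L, ⁅x, w⁆ = 0 ∧ ⁅y, w⁆ = ⁅x, ⁅x, y⁆⁆ := by
  have hx := notMem_ker_of_lie_lie_ne_zero (R := F) hu
  obtain ⟨w, hxw, hzw, hyw⟩ := exists_lie_eq_zero_lie_ne_zero hrank hone hbot hy hu hdim hstem
  have hywL : ⁅y, w⁆ ∈ lowerCentralSeries F L L 2 :=
    mem_lowerCentralSeries_succ_of_lie_eq_zero hrank hbot hx
      (lie_mem_lowerCentralSeries_one_s4 y w) (by rw [leibniz_lie, hzw, hxw, lie_zero, add_zero])
  obtain ⟨c, hc⟩ := exists_smul_eq_of_mem_of_finrank_eq_one hone hywL hyw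
    (lie_lie_mem_lowerCentralSeries_two x x y)
  exact ⟨c • w, by rw [lie_smul, hxw, smul_zero], by rw [lie_smul, hc]⟩

end PlanarDerivedSubalgebra

/-- A 5-dimensional stem nilpotent Lie algebra of class 3 with 2-dimensional derived
subalgebra is isomorphic to `L_{5,5}`. -/
theorem stem_class_three_dim_five_iso_L55
    (F L : Type u) [Field F] [LieRing L] [LieAlgebra F L] [FiniteDimensional F L]
    (hdim : finrank F L = 5)
    (hclass : LieModule.lowerCentralSeries F L L 2 ≠ ⊥ ∧ LieModule.lowerCentralSeries F L L 3 = ⊥)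
    (hder : finrank F ↥(LieModule.lowerCentralSeries F L L 1) = 2)
    (hstem : LieAlgebra.center F L ≤ LieModule.lowerCentralSeries F L L 1) :
    IsL55 F L := by
  obtain ⟨hne, hbot⟩ := hclass
  have hone : finrank F (LieModule.lowerCentralSeries F L L 2) = 1 :=
    finrank_lowerCentralSeries_succ_eq_one (k := 1) hder hne hbot
  have hrank : finrank F (LieModule.lowerCentralSeries F L L 1) =
      finrank F (LieModule.lowerCentralSeries F L L 2) + 1 := by rw [hder, hone]
  obtain ⟨x, y, hy, hu⟩ := exists_filiform_pair hrank hone hbot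
  obtain ⟨w, hxw, hyw⟩ := exists_lie_eq_zero_lie_eq_lie_lie hrank hone hbot hy hu hdim hstem
  have hxu : ⁅x, ⁅x, ⁅x, y⁆⁆⁆ = 0 :=
    lie_eq_zero_of_mem_lowerCentralSeries hbot x (lie_lie_mem_lowerCentralSeries_two x x y)
  exact isL55_of_relations hdim hy hxw hyw hu hxu
end
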